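/- arXiv:0909.1536 — 2 statements merged into one kernel-verified Lean document; each statement's English description precedes it below -/
import Mathlib

section
/- Let n ≥ 1 and let λ be a partition of n with ℓ = ℓ(λ) parts. Then the genus-zero one-part double Hurwitz number satisfies N(λ, (n); ℓ − 1) / n! = (ℓ − 1)! · n^{ℓ−2} / |Aut(λ)|, where n^{ℓ−2} is computed in ℚ (so it equals 1/n when ℓ = 1). Equivalently, the number of tuples (α, τ_1, …, τ_{ℓ−1}), with α a permutation of {1, …, n} of cycle type λ and each τ_i a transposition such that τ_{ℓ−1} ⋯ τ_1 · α is an n-cycle, equals n! · (ℓ − 1)! · n^{ℓ−2} / |Aut(λ)|. -/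
open Equiv Nat

/-- The one-part partition `(n)` of `n` (for `n ≥ 1`). -/
def onePartPartition (n : ℕ) (hn : 1 ≤ n) : Nat.Partition n :=
  ⟨{n}, fun hi => by simp_all; omega, by simp⟩

/-- `N(λ, ρ; b)`: the number of tuples `(α, τ₁, …, τ_b)` where `α` is a permutation of
`{1, …, n}` with cycle type `λ`, each `τᵢ` is a transposition, and `τ_b ⋯ τ₁ · α` has
cycle type `ρ`. -/
noncomputable def hurwitzN (n b : ℕ) (lam rho : Nat.Partition n) : ℕ :=
  Nat.card {p : Equiv.Perm (Fin n) × (Fin b → Equiv.Perm (Fin n)) //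
    p.1.partition.parts = lam.parts ∧
    (∀ i, (p.2 i).IsSwap) ∧
    ((List.ofFn p.2).reverse.prod * p.1).partition.parts = rho.parts}

/-- `|Aut(λ)| = ∏ₘ (mₘ(λ))!`, the product over part sizes of the factorial of the
multiplicity of that part size. -/
def autCard {n : ℕ} (lam : Nat.Partition n) : ℕ :=
  ∏ m ∈ lam.parts.toFinset, (lam.parts.count m)!

/-!
Left multiplication by `swap a b` joins the cycles of `a` and `b` if these are different, and
otherwise cuts the common cycle in two. A walk from `ℓ` cycles to a single one in `ℓ - 1` steps
therefore only joins. A join of cycles `A` and `B` multiplies the product of the cycle lengths by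
`1 / |A| + 1 / |B|`, and these factors sum to `2 n (ℓ - 1)` over all ordered pairs of points in
different cycles. By induction on `ℓ`, a permutation of cycle type `λ` starts
`(ℓ - 1)! n ^ (ℓ - 2) ∏ λᵢ` walks ending at an `n`-cycle, and there are `n! / (∏ λᵢ |Aut λ|)`
such permutations.
-/

namespace DoubleHurwitz

open scoped Finset

section SameCycle

variable {V : Type*} {σ τ : Perm V} {a b x y : V}

lemma mem_of_sameCycle_of_mapsTo [Finite V] {s : Set V} (hs : Set.MapsTo σ s s)
    (hxy : σ.SameCycle x y) (hx : x ∈ s) : y ∈ s := by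
  obtain ⟨n, rfl⟩ := hxy.exists_nat_pow_eq
  exact hs.perm_pow n hx

lemma sameCycle_mono [Finite V] (h : ∀ z, τ.SameCycle z (σ z)) (hxy : σ.SameCycle x y) :
    τ.SameCycle x y :=
  mem_of_sameCycle_of_mapsTo (s := {z | τ.SameCycle x z}) (fun z hz => hz.trans (h z)) hxy .rfl

variable [DecidableEq V]

lemma sameCycle_swap_apply (hab : σ.SameCycle a b) (x : V) : σ.SameCycle x (swap a b x) := by
  rw [swap_apply_def]
  split_ifs with ha hb
  · exact ha ▸ hab
  · exact hb ▸ hab.symm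
  · exact .rfl

lemma sameCycle_of_swap_mul [Finite V] (hab : σ.SameCycle a b)
    (hxy : (swap a b * σ).SameCycle x y) : σ.SameCycle x y :=
  sameCycle_mono
    (fun z => (Perm.sameCycle_apply_right.2 .rfl).trans (sameCycle_swap_apply hab (σ z))) hxy

lemma sameCycle_swap_mul_of_not_sameCycle [Finite V] (hab : ¬ σ.SameCycle a b) :
    (swap a b * σ).SameCycle a b := by
  by_contra hab'
  -- Until `σ` returns to `a`, the orbits of `a` under `σ` and `swap a b * σ` agree.
  have hmaps : Set.MapsTo σ {z | σ.SameCycle a z ∧ (swap a b * σ).SameCycle a z}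
      {z | σ.SameCycle a z ∧ (swap a b * σ).SameCycle a z} := by
    rintro z ⟨hz, hz'⟩
    have hσz : σ.SameCycle a (σ z) := Perm.sameCycle_apply_right.2 hz
    have hτz : (swap a b * σ).SameCycle a (swap a b (σ z)) := Perm.sameCycle_apply_right.2 hz'
    have hza : σ z ≠ a := fun h => hab' (by simpa [h] using hτz)
    have hzb : σ z ≠ b := fun h => hab (h ▸ hσz)
    exact ⟨hσz, by rwa [swap_apply_of_ne_of_ne hza hzb] at hτz⟩
  have hpred : (swap a b * σ).SameCycle a (σ⁻¹ a) :=
    (mem_of_sameCycle_of_mapsTo hmaps (x := a) (y := σ⁻¹ a) ⟨-1, by simp⟩ ⟨.rfl, .rfl⟩).2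
  exact hab' (by simpa using Perm.sameCycle_apply_right.2 hpred)

lemma sameCycle_swap_mul [Finite V] (hab : ¬ σ.SameCycle a b) (hxy : σ.SameCycle x y) :
    (swap a b * σ).SameCycle x y :=
  sameCycle_of_swap_mul (a := a) (b := b) (sameCycle_swap_mul_of_not_sameCycle hab)
    (by simpa using hxy)

end SameCycle

section Finpartition

variable {V : Type*} [DecidableEq V] {s : Finset V} (P : Finpartition s)

lemma sum_inv_card_part {K : Type*} [DivisionSemiring K] [CharZero K] :
    ∑ x ∈ s, (#(P.part x) : K)⁻¹ = #P.parts := by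
  calc ∑ x ∈ s, (#(P.part x) : K)⁻¹
      = ∑ A ∈ P.parts, ∑ x ∈ A, (#(P.part x) : K)⁻¹ :=
        (Finset.sum_congr P.biUnion_parts.symm fun _ _ => rfl).trans
          (Finset.sum_biUnion P.disjoint)
    _ = ∑ A ∈ P.parts, 1 := Finset.sum_congr rfl fun A hA => by
        have hcard : (#A : K) ≠ 0 :=
          Nat.cast_ne_zero.2 (P.nonempty_of_mem_parts hA).card_pos.ne'
        rw [Finset.sum_congr rfl fun x hx => by rw [P.part_eq_of_mem hA hx],
          Finset.sum_const, nsmul_eq_mul, mul_inv_cancel₀ hcard]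
    _ = #P.parts := by simp

lemma sum_sum_inv_card_part_add_inv_card_part {K : Type*} [Field K] [CharZero K] :
    ∑ x ∈ s, ∑ y ∈ s \ P.part x, ((#(P.part x) : K)⁻¹ + (#(P.part y) : K)⁻¹) =
      2 * (#s * (#P.parts - 1)) := by
  have hleft : ∑ x ∈ s, ∑ _y ∈ s \ P.part x, (#(P.part x) : K)⁻¹ = #s * (#P.parts - 1) := by
    calc ∑ x ∈ s, ∑ _y ∈ s \ P.part x, (#(P.part x) : K)⁻¹
        = ∑ x ∈ s, (#s * (#(P.part x) : K)⁻¹ - 1) := Finset.sum_congr rfl fun x hx => by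
          have hcard : (#(P.part x) : K) ≠ 0 :=
            Nat.cast_ne_zero.2 (P.part_nonempty.2 hx).card_pos.ne'
          rw [Finset.sum_const, nsmul_eq_mul, Finset.cast_card_sdiff (P.part_subset x), sub_mul,
            mul_inv_cancel₀ hcard]
      _ = #s * (#P.parts - 1) := by
          rw [Finset.sum_sub_distrib, ← Finset.mul_sum, sum_inv_card_part]
          simp [mul_sub]
  have hright : ∑ x ∈ s, ∑ y ∈ s \ P.part x, (#(P.part y) : K)⁻¹ = #s * (#P.parts - 1) := by
    rw [← hleft]
    refine Finset.sum_comm' fun x y => ?_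
    simp only [Finset.mem_sdiff, P.mem_part_iff_exists]
    grind
  simp_rw [Finset.sum_add_distrib]
  rw [hleft, hright, two_mul]

variable {P} in
lemma map_card_parts_of_merge {Q : Finpartition s} {A B : Finset V} (hA : A ∈ P.parts)
    (hB : B ∈ P.parts) (hAB : A ≠ B)
    (hQ : Q.parts = insert (A ∪ B) ((P.parts.erase A).erase B)) :
    #A ::ₘ #B ::ₘ Q.parts.val.map Finset.card = (#A + #B) ::ₘ P.parts.val.map Finset.card := by
  have hdisj : Disjoint A B := P.disjoint hA hB hAB
  have hunion : A ∪ B ∉ (P.parts.erase A).erase B := fun h => by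
    obtain ⟨x, hx⟩ := P.nonempty_of_mem_parts hA
    obtain ⟨-, hne, hmem⟩ := by simpa only [Finset.mem_erase] using h
    exact hne (P.eq_of_mem_parts hmem hA (Finset.mem_union_left B hx) hx)
  have hP : P.parts.val = A ::ₘ B ::ₘ ((P.parts.erase A).erase B).val := by
    rw [← Finset.insert_val_of_notMem (Finset.notMem_erase B _),
      Finset.insert_erase (Finset.mem_erase.2 ⟨hAB.symm, hB⟩),
      ← Finset.insert_val_of_notMem (Finset.notMem_erase A _), Finset.insert_erase hA]
  rw [hQ, hP, Finset.insert_val_of_notMem hunion]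
  simp only [Multiset.map_cons, Finset.card_union_of_disjoint hdisj]
  rw [Multiset.cons_swap (#B), Multiset.cons_swap (#A)]

end Finpartition

section CycleFinpartition

variable {V : Type*} [Fintype V] [DecidableEq V] {σ : Perm V} {a b x y : V}

instance (σ : Perm V) : DecidableRel (Perm.SameCycle.setoid σ) :=
  inferInstanceAs (DecidableRel σ.SameCycle)

/-- The partition of the underlying set into the cycles of `σ`, fixed points included (as opposed
to `Equiv.Perm.cycleFactorsFinset`). -/
def cycleFinpartition (σ : Perm V) : Finpartition (Finset.univ : Finset V) :=
  Finpartition.ofSetoid (Perm.SameCycle.setoid σ)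

lemma mem_part_cycleFinpartition :
    y ∈ (cycleFinpartition σ).part x ↔ σ.SameCycle x y :=
  Finpartition.mem_part_ofSetoid_iff_rel

lemma exists_part_cycleFinpartition_eq {A : Finset V} (hA : A ∈ (cycleFinpartition σ).parts) :
    ∃ x, (cycleFinpartition σ).part x = A := by
  obtain ⟨x, hx⟩ := (cycleFinpartition σ).nonempty_of_mem_parts hA
  exact ⟨x, (cycleFinpartition σ).part_eq_of_mem hA hx⟩

lemma support_cycleOf_eq_part (hx : x ∈ σ.support) :
    (σ.cycleOf x).support = (cycleFinpartition σ).part x := by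
  ext y
  rw [Perm.mem_support_cycleOf_iff, mem_part_cycleFinpartition, and_iff_left hx]

lemma two_le_card_part_iff : 2 ≤ #((cycleFinpartition σ).part x) ↔ x ∈ σ.support := by
  refine ⟨fun h => ?_, fun h => ?_⟩
  · obtain ⟨y, hy, hyx⟩ := Finset.exists_mem_ne h x
    rw [Perm.mem_support]
    exact fun hfix => hyx ((mem_part_cycleFinpartition.1 hy).eq_of_left hfix).symm
  · rw [← support_cycleOf_eq_part h]
    exact Perm.two_le_card_support_cycleOf_iff.2 (Perm.mem_support.1 h)

lemma image_support_cycleFactorsFinset (σ : Perm V) :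
    σ.cycleFactorsFinset.image Perm.support = {A ∈ (cycleFinpartition σ).parts | 2 ≤ #A} := by
  ext A
  simp only [Finset.mem_image, Finset.mem_filter]
  constructor
  · rintro ⟨c, hc, rfl⟩
    obtain ⟨x, hx⟩ := (Perm.mem_cycleFactorsFinset_iff.1 hc).1.nonempty_support
    have hxσ : x ∈ σ.support := Perm.mem_cycleFactorsFinset_support_le hc hx
    rw [Perm.cycle_is_cycleOf hx hc, support_cycleOf_eq_part hxσ]
    exact ⟨(cycleFinpartition σ).part_mem.2 (Finset.mem_univ x), two_le_card_part_iff.2 hxσ⟩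
  · rintro ⟨hA, hcard⟩
    obtain ⟨x, rfl⟩ := exists_part_cycleFinpartition_eq hA
    have hxσ := two_le_card_part_iff.1 hcard
    exact ⟨σ.cycleOf x, Perm.cycleOf_mem_cycleFactorsFinset_iff.2 hxσ,
      support_cycleOf_eq_part hxσ⟩

lemma injOn_support_cycleFactorsFinset (σ : Perm V) :
    Set.InjOn Perm.support (σ.cycleFactorsFinset : Set (Perm V)) := by
  intro c hc d hd hcd
  obtain ⟨x, hx⟩ := (Perm.mem_cycleFactorsFinset_iff.1 hc).1.nonempty_support
  rw [Perm.cycle_is_cycleOf hx hc, Perm.cycle_is_cycleOf (hcd ▸ hx) hd]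

lemma cycleType_eq_filter_map_card_parts (σ : Perm V) :
    σ.cycleType = ((cycleFinpartition σ).parts.val.map Finset.card).filter (2 ≤ ·) := by
  calc σ.cycleType
      = (σ.cycleFactorsFinset.image Perm.support).val.map Finset.card := by
        rw [Finset.image_val_of_injOn (injOn_support_cycleFactorsFinset σ), Multiset.map_map,
          Perm.cycleType_def]
    _ = ((cycleFinpartition σ).parts.val.map Finset.card).filter (2 ≤ ·) := by
        rw [image_support_cycleFactorsFinset, Finset.filter_val, Multiset.filter_map]
        rfl

end CycleFinpartition

section Partition

lemma filter_two_le_add_replicate_count_one {n : ℕ} (lam : n.Partition) :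
    lam.parts.filter (2 ≤ ·) + Multiset.replicate (lam.parts.count 1) 1 = lam.parts := by
  have hone : lam.parts.filter (fun i => ¬ 2 ≤ i) = Multiset.replicate (lam.parts.count 1) 1 := by
    rw [← Multiset.filter_eq']
    refine Multiset.filter_congr fun i hi => ?_
    have := lam.parts_pos hi
    omega
  rw [← hone, Multiset.filter_add_not]

lemma sum_filter_two_le_add_count_one {n : ℕ} (lam : n.Partition) :
    (lam.parts.filter (2 ≤ ·)).sum + lam.parts.count 1 = n := by
  simpa [lam.parts_sum] using congrArg Multiset.sum (filter_two_le_add_replicate_count_one lam)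

lemma card_parts_pos {n : ℕ} (hn : 1 ≤ n) (lam : n.Partition) : 0 < Multiset.card lam.parts := by
  refine Multiset.card_pos.2 fun h => ?_
  have hsum := lam.parts_sum
  rw [h, Multiset.sum_zero] at hsum
  omega

lemma autCard_eq_factorial_count_one_mul {n : ℕ} (lam : n.Partition) :
    autCard lam = (lam.parts.count 1)! *
      ∏ i ∈ (lam.parts.filter (2 ≤ ·)).toFinset, ((lam.parts.filter (2 ≤ ·)).count i)! := by
  have hinsert : insert 1 lam.parts.toFinset =
      insert 1 (lam.parts.filter (2 ≤ ·)).toFinset := by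
    ext i
    have hpos : i ∈ lam.parts → 0 < i := fun hi => lam.parts_pos hi
    simp only [Finset.mem_insert, Multiset.mem_toFinset, Multiset.mem_filter]
    grind
  rw [autCard, ← Finset.prod_insert_of_eq_one_if_notMem (a := 1) (by simp +contextual), hinsert,
    Finset.prod_insert (by simp)]
  congr 1
  refine Finset.prod_congr rfl fun i hi => ?_
  rw [Multiset.count_filter_of_pos (Multiset.mem_filter.1 (Multiset.mem_toFinset.1 hi)).2]

lemma autCard_ne_zero {n : ℕ} (lam : n.Partition) : autCard lam ≠ 0 :=
  Finset.prod_ne_zero_iff.2 fun _ _ => Nat.factorial_ne_zero _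

variable {V : Type*} [Fintype V] [DecidableEq V]

lemma parts_partition_eq_iff {n : ℕ} (hV : Fintype.card V = n) (σ : Perm V) (lam : n.Partition) :
    σ.partition.parts = lam.parts ↔ σ.cycleType = lam.parts.filter (2 ≤ ·) := by
  refine ⟨fun h => by rw [← Perm.filter_parts_partition_eq_cycleType, h], fun h => ?_⟩
  have hones : Fintype.card V - #σ.support = lam.parts.count 1 := by
    rw [← Perm.sum_cycleType, h, hV]
    have := sum_filter_two_le_add_count_one lam
    omega
  rw [Perm.parts_partition, h, hones, filter_two_le_add_replicate_count_one]

lemma card_filter_parts_partition_mul {n : ℕ} (hV : Fintype.card V = n) (lam : n.Partition) :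
    #{σ : Perm V | σ.partition.parts = lam.parts} * (lam.parts.prod * autCard lam) = n ! := by
  have hsum := sum_filter_two_le_add_count_one lam
  have hprod : lam.parts.prod = (lam.parts.filter (2 ≤ ·)).prod := by
    simpa using (congrArg Multiset.prod (filter_two_le_add_replicate_count_one lam)).symm
  have hcount := Perm.card_of_cycleType_mul_eq V (lam.parts.filter (2 ≤ ·))
  have hones : n - (lam.parts.filter (2 ≤ ·)).sum = lam.parts.count 1 := by omega
  rw [hV, if_pos ⟨by omega, fun i hi => (Multiset.mem_filter.1 hi).2⟩, hones] at hcount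
  simp only [parts_partition_eq_iff hV]
  rw [autCard_eq_factorial_count_one_mul, hprod, ← hcount]
  ring

lemma parts_partition_eq_map_card_parts (σ : Perm V) :
    σ.partition.parts = (cycleFinpartition σ).parts.val.map Finset.card := by
  let lam : (Fintype.card V).Partition :=
    { parts := (cycleFinpartition σ).parts.val.map Finset.card
      parts_pos := fun hi => by
        obtain ⟨A, hA, rfl⟩ := Multiset.mem_map.1 hi
        exact ((cycleFinpartition σ).nonempty_of_mem_parts hA).card_pos
      parts_sum := (cycleFinpartition σ).sum_card_parts }
  exact (parts_partition_eq_iff rfl σ lam).2 (cycleType_eq_filter_map_card_parts σ)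

lemma card_parts_partition (σ : Perm V) :
    Multiset.card σ.partition.parts = #(cycleFinpartition σ).parts := by
  rw [parts_partition_eq_map_card_parts, Multiset.card_map, Finset.card_val]

lemma parts_eq_singleton_iff {n : ℕ} (lam : n.Partition) :
    lam.parts = {n} ↔ Multiset.card lam.parts = 1 := by
  refine ⟨fun h => by rw [h, Multiset.card_singleton], fun h => ?_⟩
  obtain ⟨m, hm⟩ := Multiset.card_eq_one.1 h
  have hsum := lam.parts_sum
  rw [hm, Multiset.sum_singleton] at hsum
  rw [hm, hsum]

end Partition

section CutAndJoin

variable {V : Type*} [Fintype V] [DecidableEq V] {σ : Perm V} {a b : V}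

lemma part_cycleFinpartition_swap_mul (hab : ¬ σ.SameCycle a b) (x : V) :
    (cycleFinpartition (swap a b * σ)).part x =
      if x ∈ (cycleFinpartition σ).part a ∪ (cycleFinpartition σ).part b then
        (cycleFinpartition σ).part a ∪ (cycleFinpartition σ).part b
      else (cycleFinpartition σ).part x := by
  have hjoin := sameCycle_swap_mul_of_not_sameCycle hab
  simp only [Finset.mem_union, mem_part_cycleFinpartition]
  ext y
  split_ifs with hx
  · simp only [Finset.mem_union, mem_part_cycleFinpartition]
    have hmaps : Set.MapsTo (swap a b * σ) {z | σ.SameCycle a z ∨ σ.SameCycle b z}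
        {z | σ.SameCycle a z ∨ σ.SameCycle b z} := by
      intro z hz
      rw [Perm.mul_apply, swap_apply_def]
      split_ifs
      · exact Or.inr .rfl
      · exact Or.inl .rfl
      · exact hz.imp Perm.sameCycle_apply_right.2 Perm.sameCycle_apply_right.2
    have hax : (swap a b * σ).SameCycle a x :=
      hx.elim (sameCycle_swap_mul hab) fun h => hjoin.trans (sameCycle_swap_mul hab h)
    refine ⟨fun h => (mem_of_sameCycle_of_mapsTo hmaps h hx :), fun h => hax.symm.trans ?_⟩
    exact h.elim (sameCycle_swap_mul hab) fun h => hjoin.trans (sameCycle_swap_mul hab h)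
  · simp only [mem_part_cycleFinpartition]
    have hmaps : Set.MapsTo (swap a b * σ) {z | σ.SameCycle x z} {z | σ.SameCycle x z} := by
      intro z hz
      have hσz : σ.SameCycle x (σ z) := Perm.sameCycle_apply_right.2 hz
      have hza : σ z ≠ a := fun h => hx (Or.inl (h ▸ hσz).symm)
      have hzb : σ z ≠ b := fun h => hx (Or.inr (h ▸ hσz).symm)
      rwa [Perm.mul_apply, swap_apply_of_ne_of_ne hza hzb]
    exact ⟨fun h => (mem_of_sameCycle_of_mapsTo hmaps h (.refl σ x) :), sameCycle_swap_mul hab⟩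

lemma parts_cycleFinpartition_swap_mul (hab : ¬ σ.SameCycle a b) :
    (cycleFinpartition (swap a b * σ)).parts =
      insert ((cycleFinpartition σ).part a ∪ (cycleFinpartition σ).part b)
        (((cycleFinpartition σ).parts.erase ((cycleFinpartition σ).part a)).erase
          ((cycleFinpartition σ).part b)) := by
  have hpart := part_cycleFinpartition_swap_mul hab
  set P := cycleFinpartition σ
  set Q := cycleFinpartition (swap a b * σ)
  ext A
  simp only [Finset.mem_insert, Finset.mem_erase]
  constructor
  · intro hA
    obtain ⟨x, rfl⟩ := exists_part_cycleFinpartition_eq hA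
    have hxx : x ∈ P.part x := P.mem_part (Finset.mem_univ x)
    have hPx : P.part x ∈ P.parts := P.part_mem.2 (Finset.mem_univ x)
    grind
  · rintro (rfl | ⟨hAb, hAa, hA⟩)
    · have ha : Q.part a = P.part a ∪ P.part b := by
        rw [hpart, if_pos (Finset.mem_union_left _ (P.mem_part (Finset.mem_univ a)))]
      exact ha ▸ Q.part_mem.2 (Finset.mem_univ a)
    · obtain ⟨x, rfl⟩ := exists_part_cycleFinpartition_eq hA
      have hx : x ∉ P.part a ∪ P.part b := by
        simpa [P.mem_part_iff_part_eq_part] using ⟨hAa, hAb⟩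
      have hQx : Q.part x = P.part x := by rw [hpart, if_neg hx]
      exact hQx ▸ Q.part_mem.2 (Finset.mem_univ x)

/-- With `i` and `j` the lengths of the two cycles, this is `λ ↦ (λ \ {i, j}) ∪ {i + j}`, with `i`
and `j` moved to the other side to avoid multiset subtraction. -/
lemma parts_partition_swap_mul (hab : ¬ σ.SameCycle a b) :
    #((cycleFinpartition σ).part a) ::ₘ #((cycleFinpartition σ).part b) ::ₘ
        (swap a b * σ).partition.parts =
      (#((cycleFinpartition σ).part a) + #((cycleFinpartition σ).part b)) ::ₘ
        σ.partition.parts := by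
  have hne : (cycleFinpartition σ).part a ≠ (cycleFinpartition σ).part b := fun h =>
    hab (mem_part_cycleFinpartition.1 (h ▸ mem_part_cycleFinpartition.2 .rfl))
  simp only [parts_partition_eq_map_card_parts]
  exact map_card_parts_of_merge ((cycleFinpartition σ).part_mem.2 (Finset.mem_univ a))
    ((cycleFinpartition σ).part_mem.2 (Finset.mem_univ b)) hne
    (parts_cycleFinpartition_swap_mul hab)

lemma card_parts_partition_swap_mul (hab : ¬ σ.SameCycle a b) :
    Multiset.card (swap a b * σ).partition.parts + 1 = Multiset.card σ.partition.parts := by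
  simpa using congrArg Multiset.card (parts_partition_swap_mul hab)

lemma prod_parts_partition_swap_mul {K : Type*} [Field K] [CharZero K]
    (hab : ¬ σ.SameCycle a b) :
    ((swap a b * σ).partition.parts.prod : K) = σ.partition.parts.prod *
      ((#((cycleFinpartition σ).part a) : K)⁻¹ + (#((cycleFinpartition σ).part b) : K)⁻¹) := by
  have hcard : ∀ x, (#((cycleFinpartition σ).part x) : K) ≠ 0 := fun x =>
    Nat.cast_ne_zero.2 (Finset.card_ne_zero_of_mem (mem_part_cycleFinpartition.2 .rfl))
  have ha := hcard a
  have hb := hcard b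
  have hprod := congrArg (fun m : Multiset ℕ => (m.prod : K)) (parts_partition_swap_mul hab)
  simp only [Multiset.prod_cons, Nat.cast_mul, Nat.cast_add] at hprod
  field_simp
  linear_combination hprod

lemma card_parts_partition_le_swap_mul (hab : σ.SameCycle a b) :
    Multiset.card σ.partition.parts ≤ Multiset.card (swap a b * σ).partition.parts := by
  rw [card_parts_partition, card_parts_partition]
  refine Finpartition.card_mono fun A hA => ?_
  obtain ⟨x, rfl⟩ := exists_part_cycleFinpartition_eq hA
  refine ⟨(cycleFinpartition σ).part x, (cycleFinpartition σ).part_mem.2 (Finset.mem_univ x), ?_⟩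
  exact fun y hy => mem_part_cycleFinpartition.2
    (sameCycle_of_swap_mul hab (mem_part_cycleFinpartition.1 hy))

lemma card_parts_partition_le_swap_mul_add_one (σ : Perm V) (a b : V) :
    Multiset.card σ.partition.parts ≤ Multiset.card (swap a b * σ).partition.parts + 1 := by
  by_cases hab : σ.SameCycle a b
  · exact (card_parts_partition_le_swap_mul hab).trans (Nat.le_succ _)
  · exact (card_parts_partition_swap_mul hab).ge

end CutAndJoin

section Swaps

variable {V : Type*} [DecidableEq V]

lemma swap_eq_swap_iff {a b x y : V} (hab : a ≠ b) :
    swap x y = swap a b ↔ x = a ∧ y = b ∨ x = b ∧ y = a := by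
  refine ⟨fun h => ?_, ?_⟩
  · have hxy := DFunLike.congr_fun h x
    grind [swap_apply_left]
  · rintro (⟨rfl, rfl⟩ | ⟨rfl, rfl⟩)
    exacts [rfl, swap_comm _ _]

variable [Fintype V]

open Classical in
lemma sum_sum_swap {M : Type*} [AddCommMonoid M] (f : Perm V → M) :
    ∑ x, ∑ y ∈ Finset.univ \ {x}, f (swap x y) = 2 • ∑ τ with Perm.IsSwap τ, f τ := by
  have himage : (Finset.univ : Finset V).offDiag.image (fun p => swap p.1 p.2) =
      ({τ | Perm.IsSwap τ} : Finset (Perm V)) := by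
    ext τ
    rw [Finset.mem_filter_univ]
    simp [Perm.IsSwap, eq_comm]
  have hfiber {a b : V} (hab : a ≠ b) :
      {p ∈ (Finset.univ : Finset V).offDiag | swap p.1 p.2 = swap a b} = {(a, b), (b, a)} := by
    ext ⟨x, y⟩
    simp only [Finset.mem_filter, Finset.mem_offDiag, Finset.mem_univ, true_and,
      Finset.mem_insert, Finset.mem_singleton, Prod.mk.injEq, swap_eq_swap_iff hab]
    grind
  calc ∑ x, ∑ y ∈ Finset.univ \ {x}, f (swap x y)
      = ∑ p ∈ (Finset.univ : Finset V).offDiag, f (swap p.1 p.2) :=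
        (Finset.sum_finset_product' _ _ _ fun p => by simp [eq_comm]).symm
    _ = ∑ τ with Perm.IsSwap τ,
          #{p ∈ (Finset.univ : Finset V).offDiag | swap p.1 p.2 = τ} • f τ := by
        rw [Finset.sum_comp f (fun p : V × V => swap p.1 p.2), himage]
    _ = ∑ τ with Perm.IsSwap τ, 2 • f τ := Finset.sum_congr rfl fun τ hτ => by
        obtain ⟨a, b, hab, rfl⟩ := (Finset.mem_filter.1 hτ).2
        rw [hfiber hab, Finset.card_pair (by simp [hab])]
    _ = 2 • ∑ τ with Perm.IsSwap τ, f τ := Finset.sum_nsmul _ _ _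

end Swaps

lemma card_subtype_prod_and {α β : Type*} [Fintype α] [Finite β] (q : α → Prop)
    [DecidablePred q] (r : α → β → Prop) :
    Nat.card {x : α × β // q x.1 ∧ r x.1 x.2} = ∑ a with q a, Nat.card {b // r a b} := by
  rw [Nat.card_congr (Equiv.subtypeProdEquivSigmaSubtype fun a b => q a ∧ r a b),
    Nat.card_sigma, Finset.sum_filter]
  refine Finset.sum_congr rfl fun a _ => ?_
  split_ifs with ha <;> simp [ha]

section SwapWalks

variable {V : Type*} [DecidableEq V]

/-- The number of walks `σ, τ₁σ, …, τ_b ⋯ τ₁σ` with transposition steps `τᵢ` whose endpoint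
satisfies `p`. With the start `σ` summed over a conjugacy class this is `hurwitzN`. -/
noncomputable def swapWalkCount (p : Perm V → Prop) (b : ℕ) (σ : Perm V) : ℕ :=
  Nat.card {t : Fin b → Perm V //
    (∀ i, (t i).IsSwap) ∧ p ((List.ofFn t).reverse.prod * σ)}

lemma hurwitzN_eq_sum_swapWalkCount {n : ℕ} (b : ℕ) (lam rho : n.Partition) :
    hurwitzN n b lam rho = ∑ σ : Perm (Fin n) with σ.partition.parts = lam.parts,
      swapWalkCount (fun τ => τ.partition.parts = rho.parts) b σ :=
  card_subtype_prod_and (fun σ : Perm (Fin n) => σ.partition.parts = lam.parts)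
    fun σ (t : Fin b → Perm (Fin n)) => (∀ i, (t i).IsSwap) ∧
      ((List.ofFn t).reverse.prod * σ).partition.parts = rho.parts

lemma swapWalkCount_zero (p : Perm V → Prop) (σ : Perm V) [Decidable (p σ)] :
    swapWalkCount p 0 σ = if p σ then 1 else 0 := by
  split_ifs with h <;> simp [swapWalkCount, h]

variable [Fintype V]

open Classical in
lemma swapWalkCount_succ (p : Perm V → Prop) (b : ℕ) (σ : Perm V) :
    swapWalkCount p (b + 1) σ = ∑ τ with Perm.IsSwap τ, swapWalkCount p b (τ * σ) := by
  have hcons (x : Perm V × (Fin b → Perm V)) :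
      (x.1.IsSwap ∧ (∀ i, (x.2 i).IsSwap) ∧ p ((List.ofFn x.2).reverse.prod * (x.1 * σ))) ↔
        (∀ i, (Fin.consEquiv (fun _ => Perm V) x i).IsSwap) ∧
          p ((List.ofFn (Fin.consEquiv (fun _ => Perm V) x)).reverse.prod * σ) := by
    simp [Fin.consEquiv, Fin.forall_fin_succ, mul_assoc, and_assoc]
  rw [swapWalkCount, ← Nat.card_congr ((Fin.consEquiv fun _ => Perm V).subtypeEquiv hcons)]
  exact card_subtype_prod_and Perm.IsSwap fun τ t =>
    (∀ i, (t i).IsSwap) ∧ p ((List.ofFn t).reverse.prod * (τ * σ))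

lemma two_mul_swapWalkCount_succ (p : Perm V → Prop) (b : ℕ) (σ : Perm V) :
    2 * swapWalkCount p (b + 1) σ =
      ∑ x, ∑ y ∈ Finset.univ \ {x}, swapWalkCount p b (swap x y * σ) := by
  rw [swapWalkCount_succ, sum_sum_swap fun τ => swapWalkCount p b (τ * σ), smul_eq_mul]

/-- Being an `n`-cycle on an `n`-element set. In contrast to `Equiv.Perm.IsCycle`, this holds for
the identity when `n = 1`. -/
def HasOneCycle (σ : Perm V) : Prop :=
  Multiset.card σ.partition.parts = 1

lemma swapWalkCount_hasOneCycle_eq_zero {b : ℕ} {σ : Perm V}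
    (h : b + 1 < Multiset.card σ.partition.parts) : swapWalkCount HasOneCycle b σ = 0 := by
  classical
  induction b generalizing σ with
  | zero =>
    rw [swapWalkCount_zero, if_neg]
    exact h.ne'
  | succ b ih =>
    rw [swapWalkCount_succ]
    refine Finset.sum_eq_zero fun τ hτ => ?_
    obtain ⟨x, y, -, rfl⟩ := (Finset.mem_filter.1 hτ).2
    have := card_parts_partition_le_swap_mul_add_one σ x y
    exact ih (by omega)

lemma two_mul_swapWalkCount_hasOneCycle_succ {b : ℕ} {σ : Perm V}
    (h : b + 1 < Multiset.card σ.partition.parts) :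
    2 * swapWalkCount HasOneCycle (b + 1) σ =
      ∑ x, ∑ y ∈ Finset.univ \ (cycleFinpartition σ).part x,
        swapWalkCount HasOneCycle b (swap x y * σ) := by
  rw [two_mul_swapWalkCount_succ]
  refine Finset.sum_congr rfl fun x _ => (Finset.sum_subset ?_ fun y _ hy => ?_).symm
  · exact Finset.sdiff_subset_sdiff subset_rfl
      (Finset.singleton_subset_iff.2 (mem_part_cycleFinpartition.2 .rfl))
  · -- A first step within one cycle leaves too many cycles for the remaining `b` steps.
    have hxy : σ.SameCycle x y := by simpa [mem_part_cycleFinpartition] using hy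
    exact swapWalkCount_hasOneCycle_eq_zero (h.trans_le (card_parts_partition_le_swap_mul hxy))

theorem card_mul_swapWalkCount_hasOneCycle {b : ℕ} {σ : Perm V}
    (h : Multiset.card σ.partition.parts = b + 1) :
    Fintype.card V * swapWalkCount HasOneCycle b σ =
      b ! * Fintype.card V ^ b * σ.partition.parts.prod := by
  classical
  induction b generalizing σ with
  | zero =>
    rw [swapWalkCount_zero, if_pos (show HasOneCycle σ from h),
      (parts_eq_singleton_iff σ.partition).2 h]
    simp
  | succ b ih =>
    have hterm (x y : V) (hy : y ∈ Finset.univ \ (cycleFinpartition σ).part x) :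
        (Fintype.card V * swapWalkCount HasOneCycle b (swap x y * σ) : ℚ) =
          b ! * Fintype.card V ^ b * σ.partition.parts.prod *
            ((#((cycleFinpartition σ).part x) : ℚ)⁻¹ +
              (#((cycleFinpartition σ).part y) : ℚ)⁻¹) := by
      have hxy : ¬ σ.SameCycle x y := by simpa [mem_part_cycleFinpartition] using hy
      have hcard := card_parts_partition_swap_mul hxy
      rw [mul_assoc, ← prod_parts_partition_swap_mul hxy]
      exact_mod_cast ih (by omega)
    have hdouble : (Fintype.card V * (2 * swapWalkCount HasOneCycle (b + 1) σ : ℕ) : ℚ) =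
        b ! * Fintype.card V ^ b * σ.partition.parts.prod *
          (2 * (Fintype.card V * (b + 1))) := by
      rw [two_mul_swapWalkCount_hasOneCycle_succ (by omega)]
      push_cast
      simp_rw [Finset.mul_sum]
      rw [Finset.sum_congr rfl fun x _ => Finset.sum_congr rfl (hterm x)]
      simp_rw [← Finset.mul_sum]
      rw [sum_sum_inv_card_part_add_inv_card_part, ← card_parts_partition, h, Finset.card_univ]
      push_cast
      ring
    rw [← Nat.cast_inj (R := ℚ), Nat.factorial_succ]
    push_cast at hdouble ⊢
    linear_combination hdouble / 2

end SwapWalks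

theorem mul_hurwitzN_onePartPartition_mul {n b : ℕ} (hn : 1 ≤ n) (lam : n.Partition)
    (hlam : Multiset.card lam.parts = b + 1) :
    n * hurwitzN n b lam (onePartPartition n hn) * autCard lam = n ! * (b ! * n ^ b) := by
  have hone : (fun τ : Perm (Fin n) => τ.partition.parts = (onePartPartition n hn).parts) =
      HasOneCycle := by
    funext τ
    simpa [onePartPartition, HasOneCycle] using parts_eq_singleton_iff τ.partition
  have hwalk (σ : Perm (Fin n)) (hσ : σ.partition.parts = lam.parts) :
      n * swapWalkCount HasOneCycle b σ = b ! * n ^ b * lam.parts.prod := by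
    have h := card_mul_swapWalkCount_hasOneCycle (hσ ▸ hlam)
    rw [hσ] at h
    simpa only [Fintype.card_fin] using h
  rw [hurwitzN_eq_sum_swapWalkCount, hone, Finset.mul_sum,
    Finset.sum_congr rfl fun σ hσ => hwalk σ (Finset.mem_filter.1 hσ).2, Finset.sum_const,
    smul_eq_mul, ← card_filter_parts_partition_mul (Fintype.card_fin n) lam]
  ring

end DoubleHurwitz

/-- The genus-zero one-part double Hurwitz number:
`N(λ, (n); ℓ−1) / n! = (ℓ−1)! ⋅ n^{ℓ−2} / |Aut(λ)|` (with `n^{ℓ−2}` computed in `ℚ`). -/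
theorem genus_zero_one_part_double_hurwitz (n : ℕ) (hn : 1 ≤ n) (lam : Nat.Partition n) :
    (hurwitzN n (Multiset.card lam.parts - 1) lam (onePartPartition n hn) : ℚ) / n ! =
      ((Multiset.card lam.parts - 1)! : ℚ) *
        (n : ℚ) ^ ((Multiset.card lam.parts : ℤ) - 2) / autCard lam := by
  obtain ⟨b, hb⟩ := Nat.exists_eq_add_one.2 (DoubleHurwitz.card_parts_pos hn lam)
  have hn0 : (n : ℚ) ≠ 0 := Nat.cast_ne_zero.2 (by omega)
  have hfact : (n ! : ℚ) ≠ 0 := Nat.cast_ne_zero.2 (Nat.factorial_ne_zero n)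
  have haut : (autCard lam : ℚ) ≠ 0 := Nat.cast_ne_zero.2 (DoubleHurwitz.autCard_ne_zero lam)
  have hcount : (n * hurwitzN n b lam (onePartPartition n hn) * autCard lam : ℚ) =
      n ! * (b ! * n ^ b) := mod_cast DoubleHurwitz.mul_hurwitzN_onePartPartition_mul hn lam hb
  have hexp : ((b + 1 : ℕ) : ℤ) - 2 = (b : ℤ) - 1 := by push_cast; ring
  rw [hb, Nat.add_sub_cancel, hexp, zpow_sub_one₀ hn0, zpow_natCast]
  field_simp
  linear_combination hcount
end

section
/- Let n ≥ 1 and let σ be a fixed n-cycle in the symmetric group on {1, …, n}. Then the number of (n−1)-tuples (τ_1, …, τ_{n−1}) of transpositions with τ_{n−1} ⋯ τ_1 = σ equals n^{n−2}. Equivalently, the genus-zero one-part double Hurwitz number for the trivial partition satisfies H^0_{(1^n),(n)} = n^{n−3}, i.e. N((1^n), (n); n−1) = (n−1)! · n^{n−2}. -/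
open Equiv Nat

/-- The partition `(1^n)` of `n`, with `n` parts all equal to `1`. -/
def trivialPartition (n : ℕ) : Nat.Partition n :=
  ⟨Multiset.replicate n 1, fun hi => by
      have := Multiset.eq_of_mem_replicate hi; omega, by simp⟩

/-!
Count all `n`-cycle targets at once, starting from an arbitrary `f` with `b + 1` cycles. A product
of `b` transpositions can turn `f` into an `n`-cycle only if every factor merges two cycles, and
the number `W f` of such walks depends only on the cycle lengths `ℓ`: `n * W f = b! * n ^ b * ∏ ℓ`.
This follows by induction on `b`: there are `ℓ * ℓ'` transpositions merging given cycles of lengths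
`ℓ` and `ℓ'`, the merge replaces `ℓ * ℓ'` by `ℓ + ℓ'` in the product, and the sum of `ℓ + ℓ'` over
all pairs of cycles is `b * n`. For `f = 1` this gives `(n - 1)! * n ^ (n - 2)` walks, and by
conjugation each of the `(n - 1)!` targets is reached equally often.
-/

namespace TranspositionWalk

open Finset

section Finpartition

variable {α : Type*} [DecidableEq α] {s : Finset α} (P : Finpartition s)

theorem image_part_eq_parts : s.image P.part = P.parts :=
  coe_injective <| by
    rw [coe_image]
    exact subset_antisymm (Set.image_subset_iff.2 fun _ ha => P.part_mem.2 ha) P.part_surjOn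

theorem card_filter_part_pair_eq {q : Finset α × Finset α} (hq : q ∈ P.parts ×ˢ P.parts) :
    #{p ∈ s ×ˢ s | (P.part p.1, P.part p.2) = q} = #q.1 * #q.2 := by
  obtain ⟨hq₁, hq₂⟩ := mem_product.1 hq
  rw [← card_product]
  congr 1
  ext p
  simp only [mem_filter, mem_product, Prod.ext_iff, P.part_eq_iff_mem hq₁, P.part_eq_iff_mem hq₂]
  exact ⟨And.right, fun h => ⟨⟨P.subset hq₁ h.1, P.subset hq₂ h.2⟩, h⟩⟩

theorem sum_of_part_ne {M : Type*} [AddCommMonoid M] (g : Finset α × Finset α → M) :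
    ∑ p ∈ s ×ˢ s with P.part p.1 ≠ P.part p.2, g (P.part p.1, P.part p.2) =
      ∑ q ∈ P.parts.offDiag, (#q.1 * #q.2) • g q := by
  have maps_to : ∀ p ∈ {p ∈ s ×ˢ s | P.part p.1 ≠ P.part p.2},
      (P.part p.1, P.part p.2) ∈ P.parts.offDiag := fun p hp => by
    simpa [and_assoc] using hp
  rw [← sum_fiberwise_of_maps_to maps_to]
  refine sum_congr rfl fun q hq => ?_
  obtain ⟨hq₁, hq₂, hne⟩ := mem_offDiag.1 hq
  rw [sum_congr rfl fun p hp => congrArg g (mem_filter.1 hp).2, sum_const,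
    ← card_filter_part_pair_eq P (mem_product.2 ⟨hq₁, hq₂⟩), filter_filter]
  congr 2
  refine filter_congr fun p _ => and_iff_right_of_imp ?_
  rintro rfl
  exact hne

theorem sum_offDiag_card_add_card :
    ∑ q ∈ P.parts.offDiag, (#q.1 + #q.2) = 2 * (#P.parts - 1) * #s := by
  have sum_fst : ∑ q ∈ P.parts.offDiag, #q.1 = (#P.parts - 1) * #s := by
    rw [sum_finset_product _ P.parts P.parts.erase
      fun q => by simp only [mem_offDiag, mem_erase]; tauto]
    calc
      _ = ∑ A ∈ P.parts, (#P.parts - 1) * #A :=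
        sum_congr rfl fun A hA => by simp only [sum_const, card_erase_of_mem hA, smul_eq_mul]
      _ = (#P.parts - 1) * #s := by rw [← mul_sum, P.sum_card_parts]
  have sum_snd : ∑ q ∈ P.parts.offDiag, #q.2 = ∑ q ∈ P.parts.offDiag, #q.1 :=
    sum_equiv (Equiv.prodComm _ _) (fun _ => by simp; tauto) fun _ _ => rfl
  rw [sum_add_distrib, sum_snd, sum_fst]
  ring

/-- The product of the block sizes of a partition. -/
def weight : ℕ := ∏ B ∈ P.parts, #B

/-- The product of the block sizes after the blocks `A` and `B` of `P` are replaced by their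
union. -/
def mergeWeight (A B : Finset α) : ℕ := (#A + #B) * ∏ C ∈ (P.parts.erase A).erase B, #C

theorem card_mul_card_mul_mergeWeight {A B : Finset α} (hA : A ∈ P.parts) (hB : B ∈ P.parts)
    (hAB : A ≠ B) : #A * #B * mergeWeight P A B = weight P * (#A + #B) := by
  rw [weight, mergeWeight, ← mul_prod_erase _ _ hA,
    ← mul_prod_erase _ _ (mem_erase.2 ⟨hAB.symm, hB⟩)]
  ring

theorem sum_mergeWeight_of_part_ne :
    ∑ p ∈ s ×ˢ s with P.part p.1 ≠ P.part p.2, mergeWeight P (P.part p.1) (P.part p.2) =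
      2 * (#P.parts - 1) * #s * weight P := by
  calc
    _ = ∑ q ∈ P.parts.offDiag, #q.1 * #q.2 * mergeWeight P q.1 q.2 :=
      sum_of_part_ne P fun q => mergeWeight P q.1 q.2
    _ = ∑ q ∈ P.parts.offDiag, weight P * (#q.1 + #q.2) :=
      sum_congr rfl fun q hq => by
        obtain ⟨hA, hB, hAB⟩ := mem_offDiag.1 hq
        exact card_mul_card_mul_mergeWeight P hA hB hAB
    _ = 2 * (#P.parts - 1) * #s * weight P := by
      rw [← mul_sum, sum_offDiag_card_add_card, mul_comm]

end Finpartition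

section Transpositions

variable (α : Type*) [Fintype α] [DecidableEq α]

/-- The transpositions of a finite type, as a finset over which sums can be taken. -/
def transpositions : Finset (Perm α) := univ.offDiag.image fun p => swap p.1 p.2

variable {α}

theorem mem_transpositions {t : Perm α} : t ∈ transpositions α ↔ t.IsSwap := by
  simp [transpositions, Perm.IsSwap, eq_comm]

theorem filter_swap_eq_swap {a b : α} (hab : a ≠ b) :
    ({p ∈ univ.offDiag | swap p.1 p.2 = swap a b} : Finset (α × α)) = {(a, b), (b, a)} := by
  ext ⟨x, y⟩
  simp only [mem_filter, mem_offDiag, mem_univ, true_and, mem_insert, mem_singleton,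
    Prod.mk.injEq]
  constructor
  · rintro ⟨hxy, h⟩
    have hx : swap a b x = y := by rw [← h, swap_apply_left]
    grind
  · rintro (⟨rfl, rfl⟩ | ⟨rfl, rfl⟩)
    exacts [⟨hab, rfl⟩, ⟨hab.symm, swap_comm _ _⟩]

theorem two_nsmul_sum_transpositions {M : Type*} [AddCommMonoid M] (g : Perm α → M) :
    2 • ∑ t ∈ transpositions α, g t = ∑ p ∈ univ.offDiag, g (swap p.1 p.2) := by
  rw [sum_comp g fun p : α × α => swap p.1 p.2, smul_sum]
  refine sum_congr rfl fun t ht => ?_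
  obtain ⟨a, b, hab, rfl⟩ := mem_transpositions.1 ht
  rw [filter_swap_eq_swap hab, card_pair (by simp [hab])]

end Transpositions

section MergeCycles

variable {α : Type*} {f : Perm α}

theorem sameCycle_setoid_le {r : Setoid α} (h : ∀ a, r a (f a)) : Perm.SameCycle.setoid f ≤ r := by
  have rel_pow : ∀ (k : ℕ) (a : α), r a ((f ^ k) a) := fun k a => by
    induction k with
    | zero => exact r.refl a
    | succ k ih =>
      rw [_root_.pow_succ', Perm.mul_apply]
      exact r.trans ih (h _)
  rintro a b ⟨i, hi⟩
  obtain ⟨k, rfl | rfl⟩ := i.eq_nat_or_neg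
  · exact hi ▸ rel_pow k a
  · rw [zpow_neg, Perm.inv_eq_iff_eq] at hi
    exact r.symm (hi ▸ rel_pow k b)

variable [DecidableEq α] {x y : α}

theorem sameCycle_setoid_swap_mul_le {r : Setoid α} (hf : Perm.SameCycle.setoid f ≤ r)
    (hxy : r x y) : Perm.SameCycle.setoid (swap x y * f) ≤ r := by
  have rel_swap : ∀ b, r b (swap x y b) := fun b => by
    rcases eq_or_ne b x with rfl | hx
    · rwa [swap_apply_left]
    rcases eq_or_ne b y with rfl | hy
    · rw [swap_apply_right]
      exact r.symm hxy
    · rw [swap_apply_of_ne_of_ne hx hy]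
  exact sameCycle_setoid_le fun a =>
    r.trans (hf ((Perm.SameCycle.refl f a).apply_right)) (rel_swap (f a))

theorem iff_of_sameCycle_swap_mul (p : α → Prop) (hp : ∀ a b, f.SameCycle a b → (p a ↔ p b))
    (hxy : p x ↔ p y) {a b : α} (hab : (swap x y * f).SameCycle a b) : p a ↔ p b :=
  (sameCycle_setoid_swap_mul_le (r := Setoid.ker p) (fun a b h => propext (hp a b h))
    (propext hxy) hab).to_iff

-- Along the `f`-cycle of `x` the permutation `swap x y * f` agrees with `f` until it reaches
-- `f⁻¹ x`, which it sends to `y`.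
theorem sameCycle_swap_mul_of_not_sameCycle [Finite α] (h : ¬ f.SameCycle x y) :
    (swap x y * f).SameCycle x y := by
  set g := swap x y * f with hg
  have sameCycle_pow : ∀ k : ℕ, g.SameCycle x ((f ^ k) x) := fun k => by
    induction k with
    | zero => exact Perm.SameCycle.refl g x
    | succ k ih =>
      rw [_root_.pow_succ', Perm.mul_apply]
      set z := (f ^ k) x
      by_cases hx : f z = x
      · rw [hx]
      have hy : f z ≠ y := fun hy => h <| by
        rw [← hy, Perm.sameCycle_apply_right, Perm.sameCycle_pow_right]
      have hgz : g z = f z := by rw [hg, Perm.mul_apply, swap_apply_of_ne_of_ne hx hy]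
      exact hgz ▸ ih.apply_right
  have sameCycle_inv : f.SameCycle x (f⁻¹ x) := ⟨-1, by rw [zpow_neg_one]⟩
  obtain ⟨k, -, hk⟩ := sameCycle_inv.exists_pow_eq'
  have hgy : g (f⁻¹ x) = y := by simp [hg]
  exact hgy ▸ (hk ▸ sameCycle_pow k).apply_right

theorem sameCycle_setoid_le_swap_mul [Finite α] (h : ¬ f.SameCycle x y) :
    Perm.SameCycle.setoid f ≤ Perm.SameCycle.setoid (swap x y * f) := by
  simpa only [swap_mul_self_mul] using sameCycle_setoid_swap_mul_le le_rfl
    (sameCycle_swap_mul_of_not_sameCycle h)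

end MergeCycles

section CyclePartition

variable {α : Type*} [Fintype α] [DecidableEq α]

instance decidableRelSameCycleSetoid (f : Perm α) : DecidableRel (Perm.SameCycle.setoid f).r :=
  inferInstanceAs (DecidableRel f.SameCycle)

/-- The partition of a finite type into the cycles of a permutation, fixed points included. -/
def cyclePartition (f : Perm α) : Finpartition (univ : Finset α) :=
  Finpartition.ofSetoid (Perm.SameCycle.setoid f)

variable {f : Perm α} {x y : α}

theorem mem_part_cyclePartition {a b : α} :
    b ∈ (cyclePartition f).part a ↔ f.SameCycle a b :=
  Finpartition.mem_part_ofSetoid_iff_rel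

theorem part_cyclePartition_eq_iff :
    (cyclePartition f).part x = (cyclePartition f).part y ↔ f.SameCycle x y := by
  rw [← Finpartition.mem_part_iff_part_eq_part _ (mem_univ x) (mem_univ y),
    mem_part_cyclePartition, Perm.sameCycle_comm]

theorem cyclePartition_le {g : Perm α} (h : Perm.SameCycle.setoid f ≤ Perm.SameCycle.setoid g) :
    cyclePartition f ≤ cyclePartition g := by
  intro B hB
  obtain ⟨a, -, rfl⟩ := mem_image.1 ((image_part_eq_parts (cyclePartition f)).symm ▸ hB)
  refine ⟨_, (cyclePartition g).part_mem.2 (mem_univ a), fun b hb => ?_⟩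
  rw [mem_part_cyclePartition] at hb ⊢
  exact h hb

theorem part_swap_mul_of_mem_union (h : ¬ f.SameCycle x y) {a : α}
    (ha : a ∈ (cyclePartition f).part x ∪ (cyclePartition f).part y) :
    (cyclePartition (swap x y * f)).part a =
      (cyclePartition f).part x ∪ (cyclePartition f).part y := by
  have le := sameCycle_setoid_le_swap_mul h
  have sameCycle_of_mem : ∀ b ∈ (cyclePartition f).part x ∪ (cyclePartition f).part y,
      (swap x y * f).SameCycle x b := fun b hb => by
    rw [mem_union, mem_part_cyclePartition, mem_part_cyclePartition] at hb
    rcases hb with hb | hb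
    · exact le hb
    · exact (sameCycle_swap_mul_of_not_sameCycle h).trans (le hb)
  ext b
  rw [mem_part_cyclePartition]
  refine ⟨fun hab => ?_, fun hb => (sameCycle_of_mem a ha).symm.trans (sameCycle_of_mem b hb)⟩
  refine (iff_of_sameCycle_swap_mul (· ∈ (cyclePartition f).part x ∪ (cyclePartition f).part y)
    (fun c d hcd => ?_) ?_ hab).1 ha
  · simp only [mem_union, mem_part_cyclePartition]
    exact or_congr ⟨(·.trans hcd), (·.trans hcd.symm)⟩ ⟨(·.trans hcd), (·.trans hcd.symm)⟩
  · simp [mem_part_cyclePartition]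

theorem part_swap_mul_of_notMem_union (h : ¬ f.SameCycle x y) {a : α}
    (ha : a ∉ (cyclePartition f).part x ∪ (cyclePartition f).part y) :
    (cyclePartition (swap x y * f)).part a = (cyclePartition f).part a := by
  rw [mem_union, mem_part_cyclePartition, mem_part_cyclePartition, not_or,
    Perm.sameCycle_comm, Perm.sameCycle_comm (x := y)] at ha
  ext b
  rw [mem_part_cyclePartition]
  refine ⟨fun hab => ?_, fun hb => sameCycle_setoid_le_swap_mul h (mem_part_cyclePartition.1 hb)⟩
  refine (iff_of_sameCycle_swap_mul (· ∈ (cyclePartition f).part a)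
    (fun c d hcd => ?_) ?_ hab).1 ((cyclePartition f).mem_part (mem_univ a))
  · simp only [mem_part_cyclePartition]
    exact ⟨(·.trans hcd), (·.trans hcd.symm)⟩
  · simp only [mem_part_cyclePartition, ha]

theorem parts_cyclePartition_swap_mul (h : ¬ f.SameCycle x y) :
    (cyclePartition (swap x y * f)).parts =
      insert ((cyclePartition f).part x ∪ (cyclePartition f).part y)
        (((cyclePartition f).parts.erase ((cyclePartition f).part x)).erase
          ((cyclePartition f).part y)) := by
  set P := cyclePartition f
  have mem_union_iff : ∀ a, a ∈ P.part x ∪ P.part y ↔ P.part a = P.part y ∨ P.part a = P.part x :=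
    fun a => by
      rw [mem_union, P.mem_part_iff_part_eq_part (mem_univ _) (mem_univ _),
        P.mem_part_iff_part_eq_part (mem_univ _) (mem_univ _), or_comm]
  ext B
  simp only [← image_part_eq_parts (cyclePartition (swap x y * f)), ← image_part_eq_parts P,
    mem_insert, mem_erase, mem_image, mem_univ, true_and]
  constructor
  · rintro ⟨a, rfl⟩
    by_cases ha : a ∈ P.part x ∪ P.part y
    · exact .inl (part_swap_mul_of_mem_union h ha)
    · rw [part_swap_mul_of_notMem_union h ha]
      rw [mem_union_iff, not_or] at ha
      exact .inr ⟨ha.1, ha.2, a, rfl⟩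
  · rintro (rfl | ⟨hy, hx, a, rfl⟩)
    · exact ⟨x, part_swap_mul_of_mem_union h ((mem_union_iff x).2 (.inr rfl))⟩
    · exact ⟨a, part_swap_mul_of_notMem_union h (by rw [mem_union_iff, not_or]; exact ⟨hy, hx⟩)⟩

theorem union_part_notMem_erase_erase (P : Finpartition (univ : Finset α)) :
    P.part x ∪ P.part y ∉ (P.parts.erase (P.part x)).erase (P.part y) := by
  intro hmem
  obtain ⟨-, hne, hmem⟩ := by simpa only [mem_erase] using hmem
  exact hne (P.part_eq_of_mem hmem (mem_union_left _ (P.mem_part (mem_univ x)))).symm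

theorem card_parts_swap_mul_add_one (h : ¬ f.SameCycle x y) :
    #(cyclePartition (swap x y * f)).parts + 1 = #(cyclePartition f).parts := by
  have hx := (cyclePartition f).part_mem.2 (mem_univ x)
  have hy := (cyclePartition f).part_mem.2 (mem_univ y)
  have hne := part_cyclePartition_eq_iff.not.2 h
  rw [parts_cyclePartition_swap_mul h, card_insert_of_notMem (union_part_notMem_erase_erase _),
    card_erase_add_one (mem_erase.2 ⟨Ne.symm hne, hy⟩), card_erase_add_one hx]

theorem weight_cyclePartition_swap_mul (h : ¬ f.SameCycle x y) :
    weight (cyclePartition (swap x y * f)) =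
      mergeWeight (cyclePartition f) ((cyclePartition f).part x) ((cyclePartition f).part y) := by
  have hx := (cyclePartition f).part_mem.2 (mem_univ x)
  have hy := (cyclePartition f).part_mem.2 (mem_univ y)
  have hne := part_cyclePartition_eq_iff.not.2 h
  have disjoint_parts : Disjoint ((cyclePartition f).part x) ((cyclePartition f).part y) :=
    (cyclePartition f).disjoint hx hy hne
  rw [weight, mergeWeight, parts_cyclePartition_swap_mul h,
    prod_insert (union_part_notMem_erase_erase _),
    card_union_of_disjoint disjoint_parts]

theorem card_parts_le_swap_mul (h : f.SameCycle x y) :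
    #(cyclePartition f).parts ≤ #(cyclePartition (swap x y * f)).parts :=
  Finpartition.card_mono (cyclePartition_le (sameCycle_setoid_swap_mul_le le_rfl h))

theorem card_parts_le_swap_mul_add_one (f : Perm α) (x y : α) :
    #(cyclePartition f).parts ≤ #(cyclePartition (swap x y * f)).parts + 1 := by
  by_cases h : f.SameCycle x y
  · exact (card_parts_le_swap_mul h).trans (Nat.le_succ _)
  · exact (card_parts_swap_mul_add_one h).ge

end CyclePartition

section CycleType

variable {α : Type*} [Fintype α] [DecidableEq α] (f : Perm α)

theorem part_cyclePartition_of_ne {x : α} (hx : f x ≠ x) :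
    (cyclePartition f).part x = (f.cycleOf x).support := by
  ext y
  rw [mem_part_cyclePartition, Perm.mem_support_cycleOf_iff' hx]

theorem part_cyclePartition_of_eq {x : α} (hx : f x = x) : (cyclePartition f).part x = {x} := by
  ext y
  rw [mem_part_cyclePartition, mem_singleton, eq_comm]
  exact ⟨fun h => h.eq_of_left hx, fun h => h ▸ .refl f x⟩

theorem parts_cyclePartition :
    (cyclePartition f).parts =
      f.cycleFactorsFinset.image Perm.support ∪ f.supportᶜ.image singleton := by
  have cycleFactors_eq : f.cycleFactorsFinset = f.support.image f.cycleOf := by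
    ext c
    rw [mem_image]
    refine ⟨fun hc => ?_, ?_⟩
    · obtain ⟨x, hx⟩ := (Perm.mem_cycleFactorsFinset_iff.1 hc).1.nonempty_support
      exact ⟨x, Perm.mem_cycleFactorsFinset_support_le hc hx, (Perm.cycle_is_cycleOf hx hc).symm⟩
    · rintro ⟨x, hx, rfl⟩
      exact Perm.cycleOf_mem_cycleFactorsFinset_iff.2 hx
  have parts_eq : (cyclePartition f).parts =
      (f.support ∪ f.supportᶜ).image (cyclePartition f).part := by
    rw [union_compl, image_part_eq_parts]
  rw [parts_eq, image_union, cycleFactors_eq, image_image]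
  congr 1
  · exact image_congr fun x hx => part_cyclePartition_of_ne f (Perm.mem_support.1 hx)
  · exact image_congr fun x hx => part_cyclePartition_of_eq f (by simpa using hx)

theorem injOn_support_cycleFactorsFinset :
    Set.InjOn (Perm.support : Perm α → Finset α) f.cycleFactorsFinset := fun c hc d hd hcd => by
  obtain ⟨x, hx⟩ := (Perm.mem_cycleFactorsFinset_iff.1 hc).1.nonempty_support
  rw [Perm.cycle_is_cycleOf hx hc, Perm.cycle_is_cycleOf (hcd ▸ hx) hd]

theorem map_card_parts_cyclePartition :
    (cyclePartition f).parts.val.map card = f.partition.parts := by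
  have disjoint_parts :
      Disjoint (f.cycleFactorsFinset.image Perm.support) (f.supportᶜ.image singleton) := by
    rw [disjoint_left]
    intro B hB hB'
    obtain ⟨c, -, rfl⟩ := mem_image.1 hB
    obtain ⟨x, -, hx⟩ := mem_image.1 hB'
    exact Perm.card_support_ne_one c (by rw [← hx, card_singleton])
  rw [parts_cyclePartition, ← disjUnion_eq_union _ _ disjoint_parts, disjUnion_val,
    Multiset.map_add, image_val_of_injOn (injOn_support_cycleFactorsFinset f),
    image_val_of_injOn singleton_injective.injOn, Multiset.map_map, Multiset.map_map,
    Perm.parts_partition, Perm.cycleType_def]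
  congr 1
  rw [← card_compl]
  exact Multiset.map_const' _ _

theorem card_parts_cyclePartition : #(cyclePartition f).parts = f.partition.parts.card := by
  rw [← map_card_parts_cyclePartition, Multiset.card_map, card_val]

theorem weight_cyclePartition : weight (cyclePartition f) = f.partition.parts.prod := by
  rw [← map_card_parts_cyclePartition, weight, prod_eq_multiset_prod]

theorem partition_parts_eq_singleton_iff :
    f.partition.parts = {Fintype.card α} ↔ #(cyclePartition f).parts = 1 := by
  rw [card_parts_cyclePartition, Multiset.card_eq_one]
  refine ⟨fun h => ⟨_, h⟩, ?_⟩
  rintro ⟨k, hk⟩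
  have := f.partition.parts_sum
  rw [hk, Multiset.sum_singleton] at this
  rw [hk, this]

variable (α) in
theorem parts_partition_one :
    (1 : Perm α).partition.parts = Multiset.replicate (Fintype.card α) 1 := by
  simp [Perm.parts_partition]

theorem eq_one_of_parts_partition_eq_replicate {f : Perm α} {k : ℕ}
    (h : f.partition.parts = Multiset.replicate k 1) : f = 1 := by
  rw [← Perm.cycleType_eq_zero, ← Perm.filter_parts_partition_eq_cycleType, h,
    Multiset.filter_eq_nil]
  intro i hi
  rw [Multiset.eq_of_mem_replicate hi]
  decide

end CycleType

section Walks

variable {α : Type*}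

/-- The endpoint `τ_b ⋯ τ₁ * f` of the walk that starts at `f` and multiplies on the left by
`τ₁, …, τ_b` in turn; the step `τᵢ` is stored as `τ (i - 1)`. -/
def endpoint {b : ℕ} (f : Perm α) (τ : Fin b → Perm α) : Perm α := (List.ofFn τ).reverse.prod * f

theorem endpoint_cons {b : ℕ} (f t : Perm α) (τ : Fin b → Perm α) :
    endpoint f (Fin.cons t τ : Fin (b + 1) → Perm α) = endpoint (t * f) τ := by
  simp [endpoint, List.ofFn_succ, mul_assoc]

theorem endpoint_conj {b : ℕ} (c f : Perm α) (τ : Fin b → Perm α) :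
    endpoint (MulAut.conj c f) (fun i => MulAut.conj c (τ i)) = MulAut.conj c (endpoint f τ) := by
  rw [endpoint, endpoint, map_mul, map_list_prod, List.map_reverse, List.map_ofFn]
  rfl

variable [Fintype α] [DecidableEq α]

/-- The step sequences of the `b`-step walks by transpositions that lead from `f` into `S`. -/
def transpositionWalks (b : ℕ) (f : Perm α) (S : Finset (Perm α)) : Finset (Fin b → Perm α) :=
  {τ ∈ Fintype.piFinset fun _ => transpositions α | endpoint f τ ∈ S}

theorem mem_transpositionWalks {b : ℕ} {f : Perm α} {S : Finset (Perm α)} {τ : Fin b → Perm α} :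
    τ ∈ transpositionWalks b f S ↔ (∀ i, (τ i).IsSwap) ∧ endpoint f τ ∈ S := by
  simp only [transpositionWalks, mem_filter, Fintype.mem_piFinset, mem_transpositions]

theorem cons_mem_transpositionWalks {b : ℕ} {f t : Perm α} {S : Finset (Perm α)}
    {τ : Fin b → Perm α} :
    (Fin.cons t τ : Fin (b + 1) → Perm α) ∈ transpositionWalks (b + 1) f S ↔
      t ∈ transpositions α ∧ τ ∈ transpositionWalks b (t * f) S := by
  simp only [mem_transpositionWalks, mem_transpositions, Fin.forall_fin_succ, Fin.cons_zero,
    Fin.cons_succ, endpoint_cons, and_assoc]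

theorem card_transpositionWalks_zero (f : Perm α) (S : Finset (Perm α)) :
    #(transpositionWalks 0 f S) = if f ∈ S then 1 else 0 := by
  simp [transpositionWalks, endpoint, filter_const, apply_ite]

theorem card_transpositionWalks_succ (b : ℕ) (f : Perm α) (S : Finset (Perm α)) :
    #(transpositionWalks (b + 1) f S) =
      ∑ t ∈ transpositions α, #(transpositionWalks b (t * f) S) := by
  rw [← card_sigma]
  refine card_bij' (fun τ _ => ⟨τ 0, Fin.tail τ⟩) (fun p _ => Fin.cons p.1 p.2)
    (fun τ hτ => ?_) (fun p hp => cons_mem_transpositionWalks.2 (mem_sigma.1 hp))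
    (fun τ _ => Fin.cons_self_tail τ) fun p _ => rfl
  rw [← Fin.cons_self_tail τ] at hτ
  exact mem_sigma.2 (cons_mem_transpositionWalks.1 hτ)

theorem two_mul_card_transpositionWalks_succ (b : ℕ) (f : Perm α) (S : Finset (Perm α)) :
    2 * #(transpositionWalks (b + 1) f S) =
      ∑ p ∈ univ.offDiag, #(transpositionWalks b (swap p.1 p.2 * f) S) := by
  rw [card_transpositionWalks_succ, ← smul_eq_mul,
    two_nsmul_sum_transpositions fun t => #(transpositionWalks b (t * f) S)]

theorem card_transpositionWalks_eq_sum (b : ℕ) (f : Perm α) (S : Finset (Perm α)) :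
    #(transpositionWalks b f S) = ∑ g ∈ S, #(transpositionWalks b f {g}) := by
  rw [card_eq_sum_card_fiberwise (f := endpoint f) (t := S)
    fun τ hτ => (mem_transpositionWalks.1 hτ).2]
  refine sum_congr rfl fun g hg => congrArg card ?_
  ext τ
  simp only [mem_filter, mem_transpositionWalks, mem_singleton, and_assoc]
  exact and_congr_right fun _ => and_iff_right_of_imp fun h => h ▸ hg

theorem card_transpositionWalks_conj (b : ℕ) (c f g : Perm α) :
    #(transpositionWalks b (MulAut.conj c f) {MulAut.conj c g}) =
      #(transpositionWalks b f {g}) := by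
  have isSwap_conj : ∀ t : Perm α, (MulAut.conj c t).IsSwap ↔ t.IsSwap := fun t => by
    rw [Perm.isSwap_iff_cycleType, Perm.isSwap_iff_cycleType, MulAut.conj_apply,
      Perm.cycleType_conj]
  refine (card_equiv (Equiv.piCongrRight fun _ => (MulAut.conj c).toEquiv) fun τ => ?_).symm
  change _ ↔ (fun i => MulAut.conj c (τ i)) ∈ _
  simp only [mem_transpositionWalks, endpoint_conj, isSwap_conj, mem_singleton,
    EmbeddingLike.apply_eq_iff_eq]

theorem card_transpositionWalks_one_of_isConj (b : ℕ) {g h : Perm α} (hgh : IsConj g h) :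
    #(transpositionWalks b 1 {h}) = #(transpositionWalks b 1 {g}) := by
  obtain ⟨c, rfl⟩ := isConj_iff.1 hgh
  simpa using card_transpositionWalks_conj b c 1 g

end Walks

section FullCycles

variable (α : Type*) [Fintype α] [DecidableEq α]

/-- The permutations of a finite type that consist of a single cycle; on a one-element type this
is the identity. -/
def fullCycles : Finset (Perm α) := {g | g.partition.parts = {Fintype.card α}}

variable {α}

theorem mem_fullCycles {g : Perm α} :
    g ∈ fullCycles α ↔ g.partition.parts = {Fintype.card α} := by
  simp [fullCycles]

theorem mem_fullCycles_iff_card_parts {g : Perm α} :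
    g ∈ fullCycles α ↔ #(cyclePartition g).parts = 1 := by
  rw [mem_fullCycles, partition_parts_eq_singleton_iff]

theorem isConj_of_mem_fullCycles {g h : Perm α} (hg : g ∈ fullCycles α) (hh : h ∈ fullCycles α) :
    IsConj g h := by
  rw [Perm.partition_eq_of_isConj]
  exact Nat.Partition.ext ((mem_fullCycles.1 hg).trans (mem_fullCycles.1 hh).symm)

theorem card_fullCycles {b : ℕ} (hα : Fintype.card α = b + 1) : #(fullCycles α) = b ! := by
  obtain rfl | hb := b.eq_zero_or_pos
  · have : Subsingleton α := Fintype.card_le_one_iff_subsingleton.1 hα.le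
    have eq_univ : fullCycles α = univ := eq_univ_iff_forall.2 fun g => by
      rw [mem_fullCycles, Subsingleton.elim g 1, parts_partition_one, hα, Multiset.replicate_one]
    rw [eq_univ, Finset.card_univ, Fintype.card_perm, hα, zero_add, Nat.factorial_one,
      Nat.factorial_zero]
  · have two_le : 2 ≤ Fintype.card α := by omega
    have mem_iff : ∀ g, g ∈ fullCycles α ↔ g.cycleType = {Fintype.card α} := fun g => by
      rw [mem_fullCycles]
      constructor
      · intro h
        rw [← Perm.filter_parts_partition_eq_cycleType, h, Multiset.filter_singleton,
          if_pos two_le]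
      · intro h
        rw [Perm.parts_partition, ← Perm.sum_cycleType, h]
        simp
    have card_filter := Perm.card_of_cycleType_singleton two_le le_rfl
    rw [Nat.choose_self, mul_one, hα, Nat.add_sub_cancel] at card_filter
    rw [← card_filter]
    congr 1
    ext g
    rw [mem_iff, mem_filter_univ, hα]

theorem card_transpositionWalks_fullCycles_eq_zero {b : ℕ} {f : Perm α}
    (h : b + 1 < #(cyclePartition f).parts) : #(transpositionWalks b f (fullCycles α)) = 0 := by
  induction b generalizing f with
  | zero => rw [card_transpositionWalks_zero, if_neg (mem_fullCycles_iff_card_parts.not.2 h.ne')]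
  | succ b ih =>
    rw [card_transpositionWalks_succ]
    refine sum_eq_zero fun t ht => ih ?_
    obtain ⟨x, y, -, rfl⟩ := mem_transpositions.1 ht
    have := card_parts_le_swap_mul_add_one f x y
    omega

theorem two_mul_card_transpositionWalks_fullCycles_succ {b : ℕ} {f : Perm α}
    (h : b + 1 < #(cyclePartition f).parts) :
    2 * #(transpositionWalks (b + 1) f (fullCycles α)) =
      ∑ p ∈ univ ×ˢ univ with (cyclePartition f).part p.1 ≠ (cyclePartition f).part p.2,
        #(transpositionWalks b (swap p.1 p.2 * f) (fullCycles α)) := by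
  rw [two_mul_card_transpositionWalks_succ]
  refine (sum_subset (fun p hp => ?_) fun p _ hp => ?_).symm
  · rw [mem_offDiag]
    exact ⟨mem_univ _, mem_univ _, fun hxy => (mem_filter.1 hp).2 (congrArg _ hxy)⟩
  · have sameCycle : f.SameCycle p.1 p.2 := by
      simpa [part_cyclePartition_eq_iff] using hp
    -- A transposition inside a cycle leaves too many cycles to be merged in `b` steps.
    exact card_transpositionWalks_fullCycles_eq_zero (h.trans_le (card_parts_le_swap_mul sameCycle))

theorem card_mul_card_transpositionWalks_fullCycles {b : ℕ} {f : Perm α}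
    (h : #(cyclePartition f).parts = b + 1) :
    Fintype.card α * #(transpositionWalks b f (fullCycles α)) =
      b ! * Fintype.card α ^ b * weight (cyclePartition f) := by
  induction b generalizing f with
  | zero =>
    obtain ⟨B, hB⟩ := card_eq_one.1 h
    have card_eq := (cyclePartition f).sum_card_parts
    rw [hB, sum_singleton, Finset.card_univ] at card_eq
    rw [card_transpositionWalks_zero, if_pos (mem_fullCycles_iff_card_parts.2 h), weight, hB,
      prod_singleton, card_eq]
    simp
  | succ b ih =>
    have walks_merge : ∀ p : α × α,
        (cyclePartition f).part p.1 ≠ (cyclePartition f).part p.2 →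
        Fintype.card α * #(transpositionWalks b (swap p.1 p.2 * f) (fullCycles α)) =
          b ! * Fintype.card α ^ b * mergeWeight (cyclePartition f)
            ((cyclePartition f).part p.1) ((cyclePartition f).part p.2) := fun p hp => by
      have not_sameCycle := part_cyclePartition_eq_iff.not.1 hp
      have := card_parts_swap_mul_add_one not_sameCycle
      rw [ih (by omega), weight_cyclePartition_swap_mul not_sameCycle]
    refine Nat.eq_of_mul_eq_mul_left two_pos ?_
    rw [mul_left_comm, two_mul_card_transpositionWalks_fullCycles_succ (by omega), mul_sum,
      sum_congr rfl fun p hp => walks_merge p (mem_filter.1 hp).2, ← mul_sum,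
      sum_mergeWeight_of_part_ne, h, Finset.card_univ, Nat.add_sub_cancel, Nat.factorial_succ]
    ring

theorem card_transpositionWalks_one_fullCycles {b : ℕ} (hα : Fintype.card α = b + 1) :
    #(transpositionWalks b 1 (fullCycles α)) = b ! * (b + 1) ^ (b - 1) := by
  have card_parts : #(cyclePartition (1 : Perm α)).parts = b + 1 := by
    rw [card_parts_cyclePartition, parts_partition_one, Multiset.card_replicate, hα]
  have card_mul := card_mul_card_transpositionWalks_fullCycles card_parts
  rw [weight_cyclePartition, parts_partition_one, Multiset.prod_replicate, one_pow, mul_one,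
    hα] at card_mul
  have pow_eq : (b + 1) ^ b = (b + 1) * (b + 1) ^ (b - 1) := by
    cases b with
    | zero => rfl
    | succ b => exact _root_.pow_succ' _ _
  refine Nat.eq_of_mul_eq_mul_left b.succ_pos ?_
  rw [Nat.succ_eq_add_one, card_mul, pow_eq, mul_left_comm]

theorem card_transpositionWalks_one_singleton {b : ℕ} (hα : Fintype.card α = b + 1) {σ : Perm α}
    (hσ : σ ∈ fullCycles α) : #(transpositionWalks b 1 {σ}) = (b + 1) ^ (b - 1) := by
  refine Nat.eq_of_mul_eq_mul_left b.factorial_pos ?_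
  calc
    b ! * #(transpositionWalks b 1 {σ})
    _ = ∑ g ∈ fullCycles α, #(transpositionWalks b 1 {g}) := by
      rw [sum_congr rfl fun g hg =>
          card_transpositionWalks_one_of_isConj b (isConj_of_mem_fullCycles hσ hg),
        sum_const, card_fullCycles hα, smul_eq_mul]
    _ = b ! * (b + 1) ^ (b - 1) := by
      rw [← card_transpositionWalks_eq_sum, card_transpositionWalks_one_fullCycles hα]

end FullCycles

section Hurwitz

theorem hurwitzN_trivialPartition (n b : ℕ) (rho : Nat.Partition n) :
    hurwitzN n b (trivialPartition n) rho =
      #(transpositionWalks b 1 {g : Perm (Fin n) | g.partition.parts = rho.parts}) := by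
  have parts_eq_iff : ∀ f : Perm (Fin n),
      f.partition.parts = (trivialPartition n).parts ↔ f = 1 := fun f =>
    ⟨eq_one_of_parts_partition_eq_replicate, by
      rintro rfl
      rw [parts_partition_one, Fintype.card_fin, trivialPartition]⟩
  rw [hurwitzN, Nat.subtype_card ({1} ×ˢ transpositionWalks b 1
    {g : Perm (Fin n) | g.partition.parts = rho.parts}), card_product, card_singleton, one_mul]
  rintro ⟨f, τ⟩
  rw [mem_product, mem_singleton, parts_eq_iff]
  refine and_congr_right ?_
  rintro rfl
  rw [mem_transpositionWalks, mem_filter_univ, endpoint]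

theorem hurwitzN_trivialPartition_onePartPartition (n b : ℕ) (hn : 1 ≤ n) :
    hurwitzN n b (trivialPartition n) (onePartPartition n hn) =
      #(transpositionWalks b 1 (fullCycles (Fin n))) := by
  rw [hurwitzN_trivialPartition]
  congr 2
  ext g
  rw [mem_filter_univ]
  simp only [mem_fullCycles, onePartPartition, Fintype.card_fin]

end Hurwitz

end TranspositionWalk

open TranspositionWalk

/-- For a fixed `n`-cycle `σ`, the number of `(n−1)`-tuples of transpositions with
`τ_{n−1} ⋯ τ₁ = σ` equals `n^{n−2}`; equivalently,
`N((1^n), (n); n−1) = (n−1)! ⋅ n^{n−2}`. -/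
theorem count_transposition_factorizations_of_cycle (n : ℕ) (hn : 1 ≤ n)
    (σ : Equiv.Perm (Fin n)) (hσ : σ.partition.parts = {n}) :
    Nat.card {τ : Fin (n - 1) → Equiv.Perm (Fin n) //
        (∀ i, (τ i).IsSwap) ∧ (List.ofFn τ).reverse.prod = σ} = n ^ (n - 2) ∧
    hurwitzN n (n - 1) (trivialPartition n) (onePartPartition n hn) =
      (n - 1)! * n ^ (n - 2) := by
  obtain ⟨b, rfl⟩ := Nat.exists_eq_add_of_le' hn
  have hb : Fintype.card (Fin (b + 1)) = b + 1 := Fintype.card_fin _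
  have hσ_mem : σ ∈ fullCycles (Fin (b + 1)) := by rw [mem_fullCycles, hσ, hb]
  rw [Nat.add_sub_cancel, Nat.add_sub_add_right]
  constructor
  · rw [← card_transpositionWalks_one_singleton hb hσ_mem]
    refine Nat.subtype_card _ fun τ => ?_
    rw [mem_transpositionWalks, endpoint, mul_one, Finset.mem_singleton]
  · rw [hurwitzN_trivialPartition_onePartPartition, card_transpositionWalks_one_fullCycles hb]
end
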